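/- arXiv:2011.08821 — 7 statements merged into one kernel-verified Lean document; each statement's English description precedes it below -/
import Mathlib

section
/- Let (u,ρ) be a solution of the nonlocal form of the CH2 system on [0,T)×ℝ that conserves the Hamiltonian H. If there exist real numbers t₀ < t₁ and x₀ < x₁ with (t₀,t₁)×(x₀,x₁) ⊆ [0,T)×ℝ such that u(t,x) = 0 and ρ(t,x) = 0 for all (t,x) ∈ (t₀,t₁)×(x₀,x₁), then u(t,x) = 0 and ρ(t,x) = 0 for all (t,x) ∈ [0,T)×ℝ. -/
open MeasureTheory

lemma ch2_measurable_sign : Measurable Real.sign := by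
  have : Real.sign = fun x : ℝ => if x < 0 then (-1:ℝ) else if 0 < x then 1 else 0 := by
    funext x; rfl
  rw [this]
  exact Measurable.ite measurableSet_Iio measurable_const
    (Measurable.ite measurableSet_Ioi measurable_const measurable_const)

lemma ch2_kernel_integrable (g : ℝ → ℝ) (hg : Integrable g) (x : ℝ) :
    Integrable (fun y => (-(1/2) * Real.sign (x - y) * Real.exp (-|x - y|)) * g y) := by
  refine hg.bdd_mul (c := 1) ?_ ?_
  · have h1 : Measurable (fun y : ℝ => Real.sign (x - y)) :=
      ch2_measurable_sign.comp (measurable_const.sub measurable_id)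
    have h2 : Measurable (fun y : ℝ => Real.exp (-|x - y|)) := by
      apply Continuous.measurable
      fun_prop
    exact ((measurable_const.mul h1).mul h2).aestronglyMeasurable
  · refine Filter.Eventually.of_forall fun y => ?_
    have he : Real.exp (-|x - y|) ≤ 1 := Real.exp_le_one_iff.2 (by simp)
    have hp := Real.exp_pos (-|x - y|)
    rw [Real.norm_eq_abs]
    rcases Real.sign_apply_eq (x - y) with h | h | h <;> rw [h, abs_le] <;>
      constructor <;> linarith

lemma ch2_zero (g : ℝ → ℝ) (hg : Integrable g) (hnn : ∀ y, 0 ≤ g y) (a b : ℝ) (hab : a < b)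
    (hz : ∀ y ∈ Set.Icc a b, g y = 0)
    (ha : ∫ y, (-(1/2) * Real.sign (a - y) * Real.exp (-|a - y|)) * g y = 0)
    (hb : ∫ y, (-(1/2) * Real.sign (b - y) * Real.exp (-|b - y|)) * g y = 0) :
    g =ᵐ[volume] 0 := by
  have key : ∀ y, y ∉ Set.Icc a b →
      0 < (-(1/2) * Real.sign (b - y) * Real.exp (-|b - y|))
        - (-(1/2) * Real.sign (a - y) * Real.exp (-|a - y|)) := by
    intro y hy
    rcases lt_or_ge y a with h | h
    · rw [Real.sign_of_pos (by linarith), Real.sign_of_pos (by linarith),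
        abs_of_pos (by linarith), abs_of_pos (by linarith)]
      have : Real.exp (-(b - y)) < Real.exp (-(a - y)) := Real.exp_lt_exp.2 (by linarith)
      linarith
    · have h' : b < y := by
        by_contra hc
        exact hy ⟨h, not_lt.1 hc⟩
      rw [Real.sign_of_neg (by linarith), Real.sign_of_neg (by linarith),
        abs_of_neg (by linarith), abs_of_neg (by linarith)]
      have : Real.exp (-(-(a - y))) < Real.exp (-(-(b - y))) := Real.exp_lt_exp.2 (by linarith)
      linarith
  have hia := ch2_kernel_integrable g hg a
  have hib := ch2_kernel_integrable g hg b
  have hint := integral_sub hib hia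
  rw [ha, hb, sub_zero] at hint
  have h0 := (integral_eq_zero_iff_of_nonneg (fun y => ?_) (hib.sub hia)).1 hint
  · filter_upwards [h0] with y hy
    by_cases h : y ∈ Set.Icc a b
    · exact hz y h
    · have hk := key y h
      simp only [Pi.sub_apply, Pi.zero_apply] at hy ⊢
      rw [← sub_mul] at hy
      exact (mul_eq_zero.1 hy).resolve_left hk.ne'
  · simp only [Pi.zero_apply, Pi.sub_apply]
    rw [← sub_mul]
    by_cases h : y ∈ Set.Icc a b
    · rw [hz y h, mul_zero]
    · exact mul_nonneg (key y h).le (hnn y)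

/-- **Unique continuation for the CH2 system on the line (Theorem 2.1, non-periodic case).**
If a solution of the nonlocal form of the CH2 system conserving the Hamiltonian vanishes on a
non-empty open rectangle `(t₀,t₁) × (x₀,x₁) ⊆ [0,T) × ℝ`, then it vanishes identically. -/
theorem ch2_unique_continuation_line
    (T : ℝ) (hT : 0 < T)
    (u ρ : ℝ → ℝ → ℝ)
    (hu_reg : ∀ t ∈ Set.Ico (0:ℝ) T, ContDiff ℝ 2 (u t))
    (hρ_reg : ∀ t ∈ Set.Ico (0:ℝ) T, ContDiff ℝ 1 (ρ t))
    (hu_t : ∀ t ∈ Set.Ico (0:ℝ) T, ∀ x : ℝ, DifferentiableAt ℝ (fun s => u s x) t)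
    (hρ_t : ∀ t ∈ Set.Ico (0:ℝ) T, ∀ x : ℝ, DifferentiableAt ℝ (fun s => ρ s x) t)
    (hu_L2 : ∀ t ∈ Set.Ico (0:ℝ) T, Integrable (fun x => (u t x)^2))
    (hux_L2 : ∀ t ∈ Set.Ico (0:ℝ) T, Integrable (fun x => (deriv (u t) x)^2))
    (hρ_L2 : ∀ t ∈ Set.Ico (0:ℝ) T, Integrable (fun x => (ρ t x)^2))
    (f : ℝ → ℝ → ℝ)
    (hf : ∀ t x, f t x = (u t x)^2 + (1/2) * (deriv (u t) x)^2 + (1/2) * (ρ t x)^2)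
    (hf_int : ∀ t ∈ Set.Ico (0:ℝ) T, Integrable (f t))
    (F : ℝ → ℝ → ℝ)
    (hF : ∀ t x, F t x = ∫ y, (-(1/2) * Real.sign (x - y) * Real.exp (-|x - y|)) * f t y)
    (heq1 : ∀ t ∈ Set.Ico (0:ℝ) T, ∀ x : ℝ,
      deriv (fun s => u s x) t + u t x * deriv (u t) x = -F t x)
    (heq2 : ∀ t ∈ Set.Ico (0:ℝ) T, ∀ x : ℝ,
      deriv (fun s => ρ s x) t + deriv (u t) x * ρ t x + u t x * deriv (ρ t) x = 0)
    (H : ℝ → ℝ)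
    (hH : ∀ t, H t = (1/2) * ∫ x, ((u t x)^2 + (deriv (u t) x)^2 + (ρ t x)^2))
    (hcons : ∀ t ∈ Set.Ico (0:ℝ) T, H t = H 0)
    (t₀ t₁ x₀ x₁ : ℝ) (ht01 : t₀ < t₁) (hx01 : x₀ < x₁)
    (hsub : Set.Ioo t₀ t₁ ⊆ Set.Ico (0:ℝ) T)
    (hvan : ∀ t ∈ Set.Ioo t₀ t₁, ∀ x ∈ Set.Ioo x₀ x₁, u t x = 0 ∧ ρ t x = 0) :
    ∀ t ∈ Set.Ico (0:ℝ) T, ∀ x : ℝ, u t x = 0 ∧ ρ t x = 0 := by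
  have hloc : ∀ t ∈ Set.Ioo t₀ t₁, ∀ x ∈ Set.Ioo x₀ x₁, deriv (u t) x = 0 := by
    intro t ht x hx
    have : u t =ᶠ[nhds x] fun _ => (0:ℝ) := by
      filter_upwards [isOpen_Ioo.mem_nhds hx] with y hy using (hvan t ht y hy).1
    rw [this.deriv_eq, deriv_const]
  have hFz : ∀ t ∈ Set.Ioo t₀ t₁, ∀ x ∈ Set.Ioo x₀ x₁, F t x = 0 := by
    intro t ht x hx
    have h1 : (fun s => u s x) =ᶠ[nhds t] fun _ => (0:ℝ) := by
      filter_upwards [isOpen_Ioo.mem_nhds ht] with s hs using (hvan s hs x hx).1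
    have h2 := heq1 t (hsub ht) x
    rw [h1.deriv_eq, deriv_const, (hvan t ht x hx).1] at h2
    linarith
  obtain ⟨t, ht⟩ := exists_between ht01
  obtain ⟨a, ha0, ha1⟩ := exists_between hx01
  obtain ⟨b, hb0, hb1⟩ := exists_between ha1
  have hzero : f t =ᵐ[volume] 0 := by
    refine ch2_zero (f t) (hf_int t (hsub ht)) (fun y => by rw [hf]; positivity) a b hb0 ?_ ?_ ?_
    · intro y hy
      have hy' : y ∈ Set.Ioo x₀ x₁ := ⟨ha0.trans_le hy.1, hy.2.trans_lt hb1⟩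
      rw [hf, hloc t ht y hy', (hvan t ht y hy').1, (hvan t ht y hy').2]
      norm_num
    · rw [← hF]; exact hFz t ht a ⟨ha0, ha1⟩
    · rw [← hF]; exact hFz t ht b ⟨ha0.trans hb0, hb1⟩
  have hHt : H t = 0 := by
    rw [hH, integral_eq_zero_of_ae, mul_zero]
    filter_upwards [hzero] with y hy
    rw [hf] at hy
    simp only [Pi.zero_apply] at hy ⊢
    nlinarith [sq_nonneg (u t y), sq_nonneg (deriv (u t) y), sq_nonneg (ρ t y)]
  intro s hs x
  have hHs : H s = 0 := by rw [hcons s hs, ← hcons t (hsub ht), hHt]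
  have hI : ∫ x, ((u s x)^2 + (deriv (u s) x)^2 + (ρ s x)^2) = 0 := by
    have := hH s
    linarith
  have hae := (integral_eq_zero_iff_of_nonneg (fun y =>
    add_nonneg (add_nonneg (sq_nonneg (u s y)) (sq_nonneg (deriv (u s) y))) (sq_nonneg (ρ s y)))
    (((hu_L2 s hs).add (hux_L2 s hs)).add (hρ_L2 s hs))).1 hI
  have hc1 : Continuous (u s) := (hu_reg s hs).continuous
  have hc2 : Continuous (deriv (u s)) := (hu_reg s hs).continuous_deriv (by norm_num)
  have hc3 : Continuous (ρ s) := (hρ_reg s hs).continuous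
  have hall := (Continuous.ae_eq_iff_eq volume
    (((hc1.pow 2).add (hc2.pow 2)).add (hc3.pow 2)) continuous_zero).1 hae
  have hx : (u s x)^2 + (deriv (u s) x)^2 + (ρ s x)^2 = 0 := congrFun hall x
  constructor
  · have : (u s x)^2 = 0 := by
      nlinarith [sq_nonneg (u s x), sq_nonneg (deriv (u s) x), sq_nonneg (ρ s x)]
    exact pow_eq_zero_iff (two_ne_zero) |>.1 this
  · have : (ρ s x)^2 = 0 := by
      nlinarith [sq_nonneg (u s x), sq_nonneg (deriv (u s) x), sq_nonneg (ρ s x)]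
    exact pow_eq_zero_iff (two_ne_zero) |>.1 this
end

section
/- Let (u,ρ) be a spatially 1-periodic solution of the nonlocal form of the CH2 system on [0,T)×ℝ that conserves the periodic Hamiltonian H. If there exist real numbers t₀ < t₁ in [0,T) and 0 ≤ x₀ < x₁ < 1 such that u(t,x) = 0 and ρ(t,x) = 0 for all (t,x) ∈ (t₀,t₁)×(x₀,x₁), then u(t,x) = 0 and ρ(t,x) = 0 for all (t,x) ∈ [0,T)×ℝ. -/
open MeasureTheory

/-- **Unique continuation for the CH2 system on the circle (Theorem 2.1, periodic case).**
If a spatially `1`-periodic solution of the nonlocal form of the CH2 system conserving the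
periodic Hamiltonian vanishes on `(t₀,t₁) × (x₀,x₁)` with `0 ≤ x₀ < x₁ < 1`, then it vanishes
identically. -/
theorem ch2_unique_continuation_circle
    (T : ℝ) (hT : 0 < T)
    (u ρ : ℝ → ℝ → ℝ)
    (hu_per : ∀ t x, u t (x + 1) = u t x)
    (hρ_per : ∀ t x, ρ t (x + 1) = ρ t x)
    (hu_reg : ∀ t ∈ Set.Ico (0:ℝ) T, ContDiff ℝ 2 (u t))
    (hρ_reg : ∀ t ∈ Set.Ico (0:ℝ) T, ContDiff ℝ 1 (ρ t))
    (hu_t : ∀ t ∈ Set.Ico (0:ℝ) T, ∀ x : ℝ, DifferentiableAt ℝ (fun s => u s x) t)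
    (hρ_t : ∀ t ∈ Set.Ico (0:ℝ) T, ∀ x : ℝ, DifferentiableAt ℝ (fun s => ρ s x) t)
    (f : ℝ → ℝ → ℝ)
    (hf : ∀ t x, f t x = (u t x)^2 + (1/2) * (deriv (u t) x)^2 + (1/2) * (ρ t x)^2)
    (hf_cont : ∀ t ∈ Set.Ico (0:ℝ) T, Continuous (f t))
    (g' : ℝ → ℝ)
    (hg'_int : ∀ n : ℤ, g' (n : ℝ) = 0)
    (hg'_nonint : ∀ z : ℝ, (∀ n : ℤ, z ≠ (n : ℝ)) →
      g' z = Real.sinh (z - (⌊z⌋ : ℝ) - 1/2) / (2 * Real.sinh (1/2)))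
    (F : ℝ → ℝ → ℝ)
    (hF : ∀ t x, F t x = ∫ y in Set.Ico (0:ℝ) 1, g' (x - y) * f t y)
    (heq1 : ∀ t ∈ Set.Ico (0:ℝ) T, ∀ x : ℝ,
      deriv (fun s => u s x) t + u t x * deriv (u t) x = -F t x)
    (heq2 : ∀ t ∈ Set.Ico (0:ℝ) T, ∀ x : ℝ,
      deriv (fun s => ρ s x) t + deriv (u t) x * ρ t x + u t x * deriv (ρ t) x = 0)
    (H : ℝ → ℝ)
    (hH : ∀ t, H t = (1/2) * ∫ x in Set.Ico (0:ℝ) 1,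
      ((u t x)^2 + (deriv (u t) x)^2 + (ρ t x)^2))
    (hcons : ∀ t ∈ Set.Ico (0:ℝ) T, H t = H 0)
    (t₀ t₁ x₀ x₁ : ℝ) (ht01 : t₀ < t₁)
    (ht₀ : t₀ ∈ Set.Ico (0:ℝ) T) (ht₁ : t₁ ∈ Set.Ico (0:ℝ) T)
    (hx₀ : 0 ≤ x₀) (hx01 : x₀ < x₁) (hx₁ : x₁ < 1)
    (hvan : ∀ t ∈ Set.Ioo t₀ t₁, ∀ x ∈ Set.Ioo x₀ x₁, u t x = 0 ∧ ρ t x = 0) :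
    ∀ t ∈ Set.Ico (0:ℝ) T, ∀ x : ℝ, u t x = 0 ∧ ρ t x = 0 := by
  have hs : 0 < Real.sinh (1/2) := Real.sinh_pos_iff.mpr (by norm_num)
  -- formula for the kernel in terms of the fractional part
  have hg : ∀ z : ℝ, g' z = if Int.fract z = 0 then 0
      else Real.sinh (Int.fract z - 1/2) / (2 * Real.sinh (1/2)) := by
    intro z
    by_cases h : Int.fract z = 0
    · rw [if_pos h]
      obtain ⟨n, hn⟩ := Int.fract_eq_zero_iff.mp h
      rw [← hn]; exact hg'_int n
    · rw [if_neg h]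
      rw [hg'_nonint z]
      · rfl
      · rintro n rfl
        exact h (Int.fract_intCast n)
  have hgm : Measurable g' := by
    rw [show g' = _ from funext hg]
    refine Measurable.ite ?_ measurable_const ?_
    · exact measurable_fract (measurableSet_singleton 0)
    · exact (Real.continuous_sinh.measurable.comp (measurable_fract.sub_const _)).div_const _
  have hgb : ∀ z, ‖g' z‖ ≤ 1 / 2 := by
    intro z
    rw [hg z]
    split_ifs with h
    · norm_num
    · have h0 := Int.fract_nonneg z
      have h1 := Int.fract_lt_one z
      rw [Real.norm_eq_abs, abs_le]
      have e1 : Real.sinh (Int.fract z - 1/2) ≤ Real.sinh (1/2) :=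
        Real.sinh_le_sinh.mpr (by linarith)
      have e2 : Real.sinh (-(1/2)) ≤ Real.sinh (Int.fract z - 1/2) :=
        Real.sinh_le_sinh.mpr (by linarith)
      rw [Real.sinh_neg] at e2
      constructor
      · rw [le_div_iff₀ (by positivity)]; linarith
      · rw [div_le_iff₀ (by positivity)]; linarith
  have hInteg : ∀ t ∈ Set.Ico (0:ℝ) T, ∀ x : ℝ,
      Integrable (fun y => g' (x - y) * f t y) (volume.restrict (Set.Ico (0:ℝ) 1)) := by
    intro t ht x
    have hfi : Integrable (f t) (volume.restrict (Set.Ico (0:ℝ) 1)) :=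
      ((hf_cont t ht).integrableOn_Icc (a := 0) (b := 1)).mono_set Set.Ico_subset_Icc_self
    refine hfi.bdd_mul (c := 1/2) ?_ ?_
    · exact (hgm.comp (measurable_const.sub measurable_id)).aestronglyMeasurable
    · exact Filter.Eventually.of_forall fun y => hgb _
  have hf0 : ∀ t x, 0 ≤ f t x := by
    intro t x; rw [hf]; positivity
  -- strict monotonicity of the kernel difference
  obtain ⟨a, ha0, ha1⟩ := exists_between hx01
  obtain ⟨b, hab, hb1⟩ := exists_between ha1
  have hpos : ∀ y ∈ Set.Ico (0:ℝ) 1, y < a ∨ b < y → 0 < g' (b - y) - g' (a - y) := by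
    intro y hy h
    have key : ∀ c : ℝ, Int.fract (b - y) = b - y + c → Int.fract (a - y) = a - y + c →
        0 < a - y + c → 0 < g' (b - y) - g' (a - y) := by
      intro c h1 h2 h3
      rw [hg, hg, h1, h2, if_neg (by linarith), if_neg h3.ne', ← sub_div]
      apply div_pos _ (by positivity)
      rw [sub_pos, Real.sinh_lt_sinh]
      linarith
    have hy0 := hy.1
    have hy1 := hy.2
    rcases h with h | h
    · refine key 0 ?_ ?_ (by linarith)
      · rw [Int.fract_eq_iff]; exact ⟨by linarith, by linarith, 0, by push_cast; ring⟩
      · rw [Int.fract_eq_iff]; exact ⟨by linarith, by linarith, 0, by push_cast; ring⟩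
    · refine key 1 ?_ ?_ (by linarith)
      · rw [Int.fract_eq_iff]; exact ⟨by linarith, by linarith, -1, by push_cast; ring⟩
      · rw [Int.fract_eq_iff]; exact ⟨by linarith, by linarith, -1, by push_cast; ring⟩
  obtain ⟨t, htm⟩ := exists_between ht01
  have htT : t ∈ Set.Ico (0:ℝ) T := ⟨ht₀.1.trans htm.1.le, htm.2.trans ht₁.2⟩
  have hux : ∀ x ∈ Set.Ioo x₀ x₁, deriv (u t) x = 0 := by
    intro x hx
    have : u t =ᶠ[nhds x] fun _ => 0 := by
      filter_upwards [isOpen_Ioo.mem_nhds hx] with z hz using (hvan t htm z hz).1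
    rw [this.deriv_eq]; simp
  have hfz : ∀ x ∈ Set.Ioo x₀ x₁, f t x = 0 := by
    intro x hx
    rw [hf, hux x hx, (hvan t htm x hx).1, (hvan t htm x hx).2]; norm_num
  have hFz : ∀ x ∈ Set.Ioo x₀ x₁, F t x = 0 := by
    intro x hx
    have : (fun s => u s x) =ᶠ[nhds t] fun _ => 0 := by
      filter_upwards [isOpen_Ioo.mem_nhds (show t ∈ Set.Ioo t₀ t₁ from htm)] with s hs
        using (hvan s hs x hx).1
    have h := heq1 t htT x
    rw [this.deriv_eq, (hvan t htm x hx).1] at h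
    simp at h
    exact h
  have hdiff : ∫ y in Set.Ico (0:ℝ) 1, (g' (b - y) * f t y - g' (a - y) * f t y) = 0 := by
    rw [integral_sub (hInteg t htT b) (hInteg t htT a), ← hF, ← hF,
      hFz b ⟨ha0.trans hab, hb1⟩, hFz a ⟨ha0, ha1⟩, sub_zero]
  have hae : ∀ᵐ y ∂(volume.restrict (Set.Ico (0:ℝ) 1)), f t y = 0 := by
    have hi : Integrable (fun y => g' (b - y) * f t y - g' (a - y) * f t y)
        (volume.restrict (Set.Ico (0:ℝ) 1)) := (hInteg t htT b).sub (hInteg t htT a)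
    rw [integral_eq_zero_iff_of_nonneg_ae ?_ hi] at hdiff
    · filter_upwards [hdiff, ae_restrict_mem measurableSet_Ico] with y hy hym
      by_cases h : y < a ∨ b < y
      · have hp := hpos y hym h
        have hy' : g' (b - y) * f t y - g' (a - y) * f t y = 0 := hy
        rw [← sub_mul] at hy'
        exact (mul_eq_zero.mp hy').resolve_left hp.ne'
      · push Not at h
        exact hfz y ⟨by linarith, by linarith⟩
    · filter_upwards [ae_restrict_mem measurableSet_Ico] with y hym
      show 0 ≤ g' (b - y) * f t y - g' (a - y) * f t y
      rw [← sub_mul]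
      by_cases h : y < a ∨ b < y
      · exact mul_nonneg (hpos y hym h).le (hf0 t y)
      · push Not at h
        rw [hfz y ⟨by linarith, by linarith⟩, mul_zero]
  have hHt : H t = 0 := by
    rw [hH, integral_eq_zero_of_ae, mul_zero]
    filter_upwards [hae] with y hy
    rw [hf] at hy
    show (u t y)^2 + (deriv (u t) y)^2 + (ρ t y)^2 = 0
    nlinarith [sq_nonneg (u t y), sq_nonneg (deriv (u t) y), sq_nonneg (ρ t y)]
  intro s hsT
  have hHs : H s = 0 := by rw [hcons s hsT, ← hcons t htT, hHt]
  have hcu : Continuous (deriv (u s)) := (hu_reg s hsT).continuous_deriv (by norm_num)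
  have hcont : Continuous fun x => (u s x)^2 + (deriv (u s) x)^2 + (ρ s x)^2 :=
    (((hu_reg s hsT).continuous.pow 2).add (hcu.pow 2)).add ((hρ_reg s hsT).continuous.pow 2)
  have hz : ∫ x in Set.Ico (0:ℝ) 1, ((u s x)^2 + (deriv (u s) x)^2 + (ρ s x)^2) = 0 := by
    have := hH s
    rw [hHs] at this
    linarith
  rw [integral_eq_zero_iff_of_nonneg (fun x => by positivity)
    ((hcont.integrableOn_Icc (a := 0) (b := 1)).mono_set Set.Ico_subset_Icc_self)] at hz
  have hEq := Measure.eqOn_Ico_of_ae_eq volume hz hcont.continuousOn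
    continuousOn_const
  have hbase : ∀ y ∈ Set.Ico (0:ℝ) 1, u s y = 0 ∧ ρ s y = 0 := by
    intro y hy
    have h : (u s y)^2 + (deriv (u s) y)^2 + (ρ s y)^2 = 0 := hEq hy
    constructor
    · exact pow_eq_zero_iff (two_ne_zero) |>.mp
        (by nlinarith [sq_nonneg (u s y), sq_nonneg (deriv (u s) y), sq_nonneg (ρ s y)])
    · exact pow_eq_zero_iff (two_ne_zero) |>.mp
        (by nlinarith [sq_nonneg (u s y), sq_nonneg (deriv (u s) y), sq_nonneg (ρ s y)])
  intro x
  have hx : Int.fract x ∈ Set.Ico (0:ℝ) 1 := ⟨Int.fract_nonneg x, Int.fract_lt_one x⟩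
  have p1 : Function.Periodic (u s) 1 := hu_per s
  have p2 : Function.Periodic (ρ s) 1 := hρ_per s
  have q1 := p1.sub_int_mul_eq (x := x) ⌊x⌋
  have q2 := p2.sub_int_mul_eq (x := x) ⌊x⌋
  rw [mul_one] at q1 q2
  rw [← q1, ← q2]
  exact hbase _ hx
end

section
/- Let (u,ρ) be a solution of the nonlocal form of the CH2 system on [0,T)×ℝ that conserves the Hamiltonian H, and suppose the initial data is non-trivial, i.e. x ↦ u(0,x) and x ↦ ρ(0,x) are not both identically zero. Then there is no non-empty open rectangle (t₀,t₁)×(x₀,x₁) ⊆ [0,T)×ℝ on which u and ρ both vanish identically. -/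
open MeasureTheory

lemma ch2_kernel_pos {a b y : ℝ} (hab : a < b) (hy : y < a ∨ b < y) :
    0 < (-(1/2) * Real.sign (b - y) * Real.exp (-|b - y|))
      - (-(1/2) * Real.sign (a - y) * Real.exp (-|a - y|)) := by
  rcases hy with hy | hy
  · rw [Real.sign_of_pos (by linarith), Real.sign_of_pos (by linarith),
      abs_of_pos (by linarith), abs_of_pos (by linarith)]
    have : Real.exp (-(b - y)) < Real.exp (-(a - y)) := Real.exp_lt_exp.2 (by linarith)
    linarith
  · rw [Real.sign_of_neg (by linarith), Real.sign_of_neg (by linarith),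
      abs_of_neg (by linarith), abs_of_neg (by linarith)]
    have : Real.exp (- -(a - y)) < Real.exp (- -(b - y)) := Real.exp_lt_exp.2 (by linarith)
    linarith

lemma ch2_kernel_int (x : ℝ) {g : ℝ → ℝ} (hg : Integrable g) :
    Integrable (fun y => (-(1/2) * Real.sign (x - y) * Real.exp (-|x - y|)) * g y) := by
  have hs : Measurable Real.sign := by
    unfold Real.sign
    exact Measurable.ite measurableSet_Iio measurable_const
      (Measurable.ite measurableSet_Ioi measurable_const measurable_const)
  refine hg.bdd_mul (c := 1) ?_ ?_
  · apply Measurable.aestronglyMeasurable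
    have h1 : Measurable (fun y : ℝ => Real.sign (x - y)) :=
      hs.comp (measurable_const.sub measurable_id)
    have h2 : Measurable (fun y : ℝ => Real.exp (-|x - y|)) := by
      apply Continuous.measurable; fun_prop
    exact (h1.const_mul _).mul h2
  · refine Filter.Eventually.of_forall fun y => ?_
    have h2 : Real.exp (-|x - y|) ≤ 1 := Real.exp_le_one_iff.2 (by simp)
    have h3 := Real.exp_pos (-|x - y|)
    rw [Real.norm_eq_abs, abs_le]
    rcases Real.sign_apply_eq (x - y) with h | h | h <;> rw [h] <;> constructor <;> linarith

lemma ch2_core {a b : ℝ} (hab : a < b) {g : ℝ → ℝ} (hg : Integrable g) (hc : Continuous g)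
    (h0 : ∀ y, 0 ≤ g y) (hz : ∀ y ∈ Set.Icc a b, g y = 0)
    (ha : ∫ y, (-(1/2) * Real.sign (a - y) * Real.exp (-|a - y|)) * g y = 0)
    (hb : ∫ y, (-(1/2) * Real.sign (b - y) * Real.exp (-|b - y|)) * g y = 0) :
    ∀ y, g y = 0 := by
  have hI := (ch2_kernel_int b hg).sub (ch2_kernel_int a hg)
  have hint := integral_sub (ch2_kernel_int b hg) (ch2_kernel_int a hg)
  rw [ha, hb, sub_zero] at hint
  have hout : ∀ y, y ∉ Set.Icc a b → (y < a ∨ b < y) := by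
    intro y hy
    by_contra! h
    exact hy h
  have hae := (integral_eq_zero_iff_of_nonneg (fun y => by
    by_cases hy : y ∈ Set.Icc a b
    · simp [hz y hy]
    · have := mul_nonneg (ch2_kernel_pos hab (hout y hy)).le (h0 y)
      rw [sub_mul] at this
      exact this) hI).1 hint
  have : g =ᵐ[volume] fun _ => 0 := by
    filter_upwards [hae] with y hy
    by_cases hy' : y ∈ Set.Icc a b
    · exact hz y hy'
    · have hp := ch2_kernel_pos hab (hout y hy')
      simp only [Pi.zero_apply, Pi.sub_apply] at hy
      rw [← sub_mul] at hy
      exact (mul_eq_zero.1 hy).resolve_left hp.ne'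
  have := (hc.ae_eq_iff_eq volume continuous_const).1 this
  exact fun y => congrFun this y

/-- **Corollary 2.1 (non-periodic case).** If the initial data of a solution of the nonlocal
form of the CH2 system conserving the Hamiltonian is non-trivial, then there is no non-empty
open rectangle `(t₀,t₁) × (x₀,x₁) ⊆ [0,T) × ℝ` on which `u` and `ρ` both vanish identically. -/
theorem ch2_no_vanishing_rectangle
    (T : ℝ) (hT : 0 < T)
    (u ρ : ℝ → ℝ → ℝ)
    (hu_reg : ∀ t ∈ Set.Ico (0:ℝ) T, ContDiff ℝ 2 (u t))
    (hρ_reg : ∀ t ∈ Set.Ico (0:ℝ) T, ContDiff ℝ 1 (ρ t))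
    (hu_t : ∀ t ∈ Set.Ico (0:ℝ) T, ∀ x : ℝ, DifferentiableAt ℝ (fun s => u s x) t)
    (hρ_t : ∀ t ∈ Set.Ico (0:ℝ) T, ∀ x : ℝ, DifferentiableAt ℝ (fun s => ρ s x) t)
    (hu_L2 : ∀ t ∈ Set.Ico (0:ℝ) T, Integrable (fun x => (u t x)^2))
    (hux_L2 : ∀ t ∈ Set.Ico (0:ℝ) T, Integrable (fun x => (deriv (u t) x)^2))
    (hρ_L2 : ∀ t ∈ Set.Ico (0:ℝ) T, Integrable (fun x => (ρ t x)^2))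
    (f : ℝ → ℝ → ℝ)
    (hf : ∀ t x, f t x = (u t x)^2 + (1/2) * (deriv (u t) x)^2 + (1/2) * (ρ t x)^2)
    (hf_int : ∀ t ∈ Set.Ico (0:ℝ) T, Integrable (f t))
    (F : ℝ → ℝ → ℝ)
    (hF : ∀ t x, F t x = ∫ y, (-(1/2) * Real.sign (x - y) * Real.exp (-|x - y|)) * f t y)
    (heq1 : ∀ t ∈ Set.Ico (0:ℝ) T, ∀ x : ℝ,
      deriv (fun s => u s x) t + u t x * deriv (u t) x = -F t x)
    (heq2 : ∀ t ∈ Set.Ico (0:ℝ) T, ∀ x : ℝ,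
      deriv (fun s => ρ s x) t + deriv (u t) x * ρ t x + u t x * deriv (ρ t) x = 0)
    (H : ℝ → ℝ)
    (hH : ∀ t, H t = (1/2) * ∫ x, ((u t x)^2 + (deriv (u t) x)^2 + (ρ t x)^2))
    (hcons : ∀ t ∈ Set.Ico (0:ℝ) T, H t = H 0)
    (hnontrivial : ¬ (∀ x : ℝ, u 0 x = 0 ∧ ρ 0 x = 0)) :
    ¬ ∃ t₀ t₁ x₀ x₁ : ℝ, t₀ < t₁ ∧ x₀ < x₁ ∧ Set.Ioo t₀ t₁ ⊆ Set.Ico (0:ℝ) T ∧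
      ∀ t ∈ Set.Ioo t₀ t₁, ∀ x ∈ Set.Ioo x₀ x₁, u t x = 0 ∧ ρ t x = 0 := by
  rintro ⟨t₀, t₁, x₀, x₁, ht, hx, hsub, hv⟩
  obtain ⟨t, ht⟩ := exists_between ht
  obtain ⟨a, ha0, ha1⟩ := exists_between hx
  obtain ⟨b, hb0, hb1⟩ := exists_between ha1
  have htm : t ∈ Set.Ioo t₀ t₁ := ht
  have htT := hsub htm
  have h0T : (0:ℝ) ∈ Set.Ico (0:ℝ) T := ⟨le_rfl, hT⟩
  have hcu : ∀ s ∈ Set.Ico (0:ℝ) T, Continuous (deriv (u s)) := fun s hs =>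
    (hu_reg s hs).continuous_deriv (by norm_num)
  have hux : ∀ x ∈ Set.Ioo x₀ x₁, deriv (u t) x = 0 := by
    intro x hx
    have : u t =ᶠ[nhds x] fun _ => 0 := by
      filter_upwards [isOpen_Ioo.mem_nhds hx] with z hz
      exact (hv t htm z hz).1
    rw [this.deriv_eq]; simp
  have hFz : ∀ x ∈ Set.Ioo x₀ x₁, F t x = 0 := by
    intro x hx
    have h1 : (fun s => u s x) =ᶠ[nhds t] fun _ => 0 := by
      filter_upwards [isOpen_Ioo.mem_nhds htm] with s hs
      exact (hv s hs x hx).1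
    have h2 := heq1 t htT x
    rw [h1.deriv_eq, (hv t htm x hx).1] at h2
    simp at h2
    exact h2
  have hfc : Continuous (f t) := by
    have h1 := (hu_reg t htT).continuous
    have h2 := (hρ_reg t htT).continuous
    have h3 := hcu t htT
    rw [show f t = _ from funext (hf t)]
    fun_prop
  have hfz := ch2_core hb0 (hf_int t htT) hfc (fun y => by rw [hf]; positivity)
    (fun y hy => by
      have hy' : y ∈ Set.Ioo x₀ x₁ := ⟨by linarith [hy.1], by linarith [hy.2]⟩
      rw [hf, hux y hy', (hv t htm y hy').1, (hv t htm y hy').2]; norm_num)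
    (by rw [← hF]; exact hFz a ⟨ha0, ha1⟩)
    (by rw [← hF]; exact hFz b ⟨by linarith, hb1⟩)
  have hHt : H t = 0 := by
    have : ∀ x, (u t x)^2 + (deriv (u t) x)^2 + (ρ t x)^2 = 0 := by
      intro x
      have h1 := hfz x
      rw [hf] at h1
      have := sq_nonneg (u t x)
      have := sq_nonneg (deriv (u t) x)
      have := sq_nonneg (ρ t x)
      linarith
    rw [hH]
    simp [this]
  have hH0 := hcons t htT
  rw [hHt, hH] at hH0
  have hi : ∫ x, ((u 0 x)^2 + (deriv (u 0) x)^2 + (ρ 0 x)^2) = 0 := by linarith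
  have hii := ((hu_L2 0 h0T).add (hux_L2 0 h0T)).add (hρ_L2 0 h0T)
  have hae := (integral_eq_zero_iff_of_nonneg (fun x => by
    have h : 0 ≤ (u 0 x)^2 + (deriv (u 0) x)^2 + (ρ 0 x)^2 := by positivity
    exact h) hii).1 hi
  have hc0 : Continuous (fun x => (u 0 x)^2 + (deriv (u 0) x)^2 + (ρ 0 x)^2) := by
    have h1 := (hu_reg 0 h0T).continuous
    have h2 := (hρ_reg 0 h0T).continuous
    have h3 := hcu 0 h0T
    fun_prop
  have hall := (hc0.ae_eq_iff_eq volume continuous_const).1 hae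
  apply hnontrivial
  intro x
  have h1 : (u 0 x)^2 + (deriv (u 0) x)^2 + (ρ 0 x)^2 = 0 := congrFun hall x
  have := sq_nonneg (u 0 x)
  have := sq_nonneg (deriv (u 0) x)
  have := sq_nonneg (ρ 0 x)
  exact ⟨pow_eq_zero_iff (two_ne_zero) |>.1 (by linarith),
    pow_eq_zero_iff (two_ne_zero) |>.1 (by linarith)⟩
end

section
/- Let a, b ∈ ℝ with 0 ≤ a < b < 1, and define S_{a,b} : ℝ → ℝ by S_{a,b}(y) := [sinh(b−y−⌊b−y⌋−1/2) − sinh(a−y−⌊a−y⌋−1/2)]/(2·sinh(1/2)). Then S_{a,b}(y) > 0 for all y ∈ [0,1) \ [a,b], and for every continuous, non-negative, 1-periodic f : ℝ → ℝ, writing F(x) := ∫_{[0,1)} g'(x−y) f(y) dy with g'(z) := sinh(z−⌊z⌋−1/2)/(2·sinh(1/2)) for z ∉ ℤ and g'(z) := 0 for z ∈ ℤ, one has F(b) − F(a) = ∫_{[0,1)} S_{a,b}(y) f(y) dy. -/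
open MeasureTheory

/-- **Lemma 3.4 (periodic case).** For `0 ≤ a < b < 1`, the function
`S_{a,b}(y) = [sinh(b-y-⌊b-y⌋-1/2) - sinh(a-y-⌊a-y⌋-1/2)]/(2 sinh(1/2))` is strictly positive
on `[0,1) \ [a,b]`, and for every continuous non-negative `1`-periodic `f`, with
`F(x) = ∫_{[0,1)} g'(x-y) f(y) dy` one has `F(b) - F(a) = ∫_{[0,1)} S_{a,b}(y) f(y) dy`. -/
theorem S_ab_properties_circle
    (a b : ℝ) (ha : 0 ≤ a) (hab : a < b) (hb : b < 1)
    (S : ℝ → ℝ)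
    (hS : ∀ y, S y = (Real.sinh (b - y - (⌊b - y⌋ : ℝ) - 1/2)
      - Real.sinh (a - y - (⌊a - y⌋ : ℝ) - 1/2)) / (2 * Real.sinh (1/2))) :
    (∀ y : ℝ, y ∈ Set.Ico (0:ℝ) 1 \ Set.Icc a b → 0 < S y) ∧
    (∀ f : ℝ → ℝ, Continuous f → (∀ x, 0 ≤ f x) → (∀ x, f (x + 1) = f x) →
      ∀ g' : ℝ → ℝ,
        (∀ n : ℤ, g' (n : ℝ) = 0) →
        (∀ z : ℝ, (∀ n : ℤ, z ≠ (n : ℝ)) →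
          g' z = Real.sinh (z - (⌊z⌋ : ℝ) - 1/2) / (2 * Real.sinh (1/2))) →
        ∀ F : ℝ → ℝ,
          (∀ x, F x = ∫ y in Set.Ico (0:ℝ) 1, g' (x - y) * f y) →
          F b - F a = ∫ y in Set.Ico (0:ℝ) 1, S y * f y) := by
  have hpos : 0 < 2 * Real.sinh (1/2) := by
    have : 0 < Real.sinh (1/2) := Real.sinh_pos_iff.2 (by norm_num)
    linarith
  refine ⟨?_, ?_⟩
  · rintro y ⟨⟨hy0, hy1⟩, hy⟩
    rw [hS]
    apply div_pos _ hpos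
    rw [sub_pos, Real.sinh_lt_sinh]
    by_cases h : y < a
    · have h1 : ⌊b - y⌋ = 0 := Int.floor_eq_iff.2 ⟨by push_cast; linarith, by push_cast; linarith⟩
      have h2 : ⌊a - y⌋ = 0 := Int.floor_eq_iff.2 ⟨by push_cast; linarith, by push_cast; linarith⟩
      rw [h1, h2]; linarith
    · have hby : b < y := by
        by_contra h'
        exact hy ⟨not_lt.1 h, not_lt.1 h'⟩
      have h1 : ⌊b - y⌋ = -1 := Int.floor_eq_iff.2 ⟨by push_cast; linarith, by push_cast; linarith⟩
      have h2 : ⌊a - y⌋ = -1 := Int.floor_eq_iff.2 ⟨by push_cast; linarith, by push_cast; linarith⟩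
      rw [h1, h2]; linarith
  · intro f hf _ _ g' _ hg F hF
    have key : ∀ x, F x = ∫ y in Set.Ico (0:ℝ) 1,
        (Real.sinh (x - y - (⌊x - y⌋ : ℝ) - 1/2) / (2 * Real.sinh (1/2))) * f y := by
      intro x
      rw [hF]
      apply integral_congr_ae
      apply ae_restrict_of_ae
      have hc : (Set.range (fun n : ℤ => x - (n : ℝ))).Countable := Set.countable_range _
      filter_upwards [hc.ae_notMem volume] with y hy
      rw [hg]
      intro n hn
      exact hy ⟨n, by simp only; linarith⟩
    have hint : ∀ x, IntegrableOn (fun y =>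
        (Real.sinh (x - y - (⌊x - y⌋ : ℝ) - 1/2) / (2 * Real.sinh (1/2))) * f y)
        (Set.Ico (0:ℝ) 1) := by
      intro x
      have hfi : IntegrableOn f (Set.Ico (0:ℝ) 1) :=
        (hf.continuousOn.integrableOn_Icc (a := (0:ℝ)) (b := 1)).mono_set Set.Ico_subset_Icc_self
      have hm : Measurable (fun y : ℝ =>
          Real.sinh (x - y - (⌊x - y⌋ : ℝ) - 1/2) / (2 * Real.sinh (1/2))) := by
        have h0 : Measurable (fun y : ℝ => x - y) := measurable_const.sub measurable_id
        have h1 : Measurable (fun y : ℝ => Int.fract (x - y)) := measurable_fract.comp h0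
        exact (Real.measurable_sinh.comp (h1.sub_const (1/2))).div_const _
      refine Integrable.bdd_mul (c := 1) hfi hm.aestronglyMeasurable (Filter.Eventually.of_forall ?_)
      intro y
      have hl : (⌊x - y⌋ : ℝ) ≤ x - y := Int.floor_le _
      have hu : x - y < (⌊x - y⌋ : ℝ) + 1 := Int.lt_floor_add_one _
      rw [Real.norm_eq_abs, abs_div, abs_of_pos hpos, div_le_one hpos, abs_le]
      have e1 : Real.sinh (x - y - (⌊x - y⌋ : ℝ) - 1/2) ≤ Real.sinh (1/2) :=
        Real.sinh_le_sinh.2 (by linarith)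
      have e2 : Real.sinh (-(1/2)) ≤ Real.sinh (x - y - (⌊x - y⌋ : ℝ) - 1/2) :=
        Real.sinh_le_sinh.2 (by linarith)
      rw [Real.sinh_neg] at e2
      constructor <;> linarith
    rw [key b, key a, ← integral_sub (hint b) (hint a)]
    congr 1
    funext y
    rw [hS]
    ring
end

section
/- Let u, ρ : [0,T)×ℝ → ℝ be such that for each t ∈ [0,T), x ↦ u(t,x) is continuously differentiable, x ↦ ρ(t,x) is continuous, x ↦ u(t,x), x ↦ u_x(t,x), x ↦ ρ(t,x) are square-integrable, f_t(x) := u(t,x)² + (1/2)u_x(t,x)² + (1/2)ρ(t,x)² is integrable, and the Hamiltonian H(t) := (1/2)∫_ℝ (u(t,x)² + u_x(t,x)² + ρ(t,x)²) dx satisfies H(t) = H(0) for all t ∈ [0,T). Define F_t(x) := ∫_ℝ (−(1/2)·sgn(x−y)·e^{−|x−y|}) f_t(y) dy. If there exist t* ∈ (0,T) and x₀ < x₁ such that f_{t*}(x) = 0 for all x ∈ (x₀,x₁) and F_{t*}(x₀) = F_{t*}(x₁), then for all t ∈ [0,T): F_t(x) = 0 and f_t(x) = 0 for all x ∈ ℝ,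 and u(t,x) = 0 and ρ(t,x) = 0 for all x ∈ ℝ. -/
open MeasureTheory

lemma aux_kernel_int (h : ℝ → ℝ) (hh : Integrable h) (x : ℝ) :
    Integrable (fun y => (-(1/2) * Real.sign (x - y) * Real.exp (-|x - y|)) * h y) := by
  have hs : Measurable Real.sign := by
    unfold Real.sign
    exact Measurable.ite measurableSet_Iio measurable_const
      (Measurable.ite measurableSet_Ioi measurable_const measurable_const)
  refine hh.bdd_mul (c := 1) ?_ ?_
  · apply Measurable.aestronglyMeasurable
    have h1 : Measurable (fun y : ℝ => Real.sign (x - y)) :=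
      hs.comp (measurable_const.sub measurable_id)
    have h2 : Measurable (fun y : ℝ => Real.exp (-|x - y|)) := by
      apply Continuous.measurable; fun_prop
    exact (measurable_const.mul h1).mul h2
  · refine Filter.Eventually.of_forall fun y => ?_
    have he : Real.exp (-|x - y|) ≤ 1 := Real.exp_le_one_iff.2 (by simp)
    have he0 := Real.exp_pos (-|x - y|)
    rw [Real.norm_eq_abs, abs_le]
    rcases Real.sign_apply_eq (x - y) with h | h | h <;> rw [h] <;>
      constructor <;> linarith

lemma aux_kernel_pos (x₀ x₁ y : ℝ) (h01 : x₀ < x₁) (hy : y < x₀ ∨ x₁ < y) :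
    0 < (-(1/2) * Real.sign (x₁ - y) * Real.exp (-|x₁ - y|))
      - (-(1/2) * Real.sign (x₀ - y) * Real.exp (-|x₀ - y|)) := by
  rcases hy with h | h
  · rw [Real.sign_of_pos (by linarith), Real.sign_of_pos (by linarith),
      abs_of_pos (by linarith), abs_of_pos (by linarith)]
    have : Real.exp (-(x₁ - y)) < Real.exp (-(x₀ - y)) := Real.exp_lt_exp.2 (by linarith)
    linarith
  · rw [Real.sign_of_neg (by linarith), Real.sign_of_neg (by linarith),
      abs_of_neg (by linarith), abs_of_neg (by linarith)]
    have : Real.exp (-(-(x₀ - y))) < Real.exp (-(-(x₁ - y))) := Real.exp_lt_exp.2 (by linarith)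
    linarith

lemma aux_zero (h : ℝ → ℝ) (hh : Integrable h) (hc : Continuous h) (h0 : ∀ x, 0 ≤ h x)
    (x₀ x₁ : ℝ) (h01 : x₀ < x₁) (hvan : ∀ x ∈ Set.Ioo x₀ x₁, h x = 0)
    (hFF : (∫ y, (-(1/2) * Real.sign (x₀ - y) * Real.exp (-|x₀ - y|)) * h y)
      = ∫ y, (-(1/2) * Real.sign (x₁ - y) * Real.exp (-|x₁ - y|)) * h y) :
    ∀ x, h x = 0 := by
  have hi := integral_sub (aux_kernel_int h hh x₁) (aux_kernel_int h hh x₀)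
  rw [hFF, sub_self] at hi
  have hne : ∀ᵐ y : ℝ, y ≠ x₀ ∧ y ≠ x₁ := by
    filter_upwards [(measure_eq_zero_iff_ae_notMem).1 (Real.volume_singleton (a := x₀)),
      (measure_eq_zero_iff_ae_notMem).1 (Real.volume_singleton (a := x₁))] with y h1 h2
    exact ⟨h1, h2⟩
  have hcase : ∀ y : ℝ, y ≠ x₀ ∧ y ≠ x₁ → (y ∈ Set.Ioo x₀ x₁ ∨ (y < x₀ ∨ x₁ < y)) := by
    rintro y ⟨h1, h2⟩
    rcases lt_or_gt_of_ne h1 with h | h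
    · exact Or.inr (Or.inl h)
    · rcases lt_or_gt_of_ne h2 with h' | h'
      · exact Or.inl ⟨h, h'⟩
      · exact Or.inr (Or.inr h')
  have hI : Integrable (fun y => (-(1/2) * Real.sign (x₁ - y) * Real.exp (-|x₁ - y|)) * h y
      - (-(1/2) * Real.sign (x₀ - y) * Real.exp (-|x₀ - y|)) * h y) :=
    (aux_kernel_int h hh x₁).sub (aux_kernel_int h hh x₀)
  rw [integral_eq_zero_iff_of_nonneg_ae ?_ hI] at hi
  · have hae : h =ᵐ[volume] (fun _ => (0:ℝ)) := by
      filter_upwards [hi, hne] with y hy hn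
      rcases hcase y hn with hm | hm
      · exact hvan y hm
      · have hp := aux_kernel_pos x₀ x₁ y h01 hm
        simp only [Pi.zero_apply] at hy
        rw [← sub_mul] at hy
        exact (mul_eq_zero.1 hy).resolve_left hp.ne'
    have := (hc.ae_eq_iff_eq volume continuous_const).1 hae
    intro x; rw [this]
  · filter_upwards [hne] with y hn
    simp only [Pi.zero_apply]
    rw [← sub_mul]
    rcases hcase y hn with hm | hm
    · rw [hvan y hm]; simp
    · exact mul_nonneg (aux_kernel_pos x₀ x₁ y h01 hm).le (h0 y)


/-- **Theorem 3.1.** Suppose the Hamiltonian is conserved. If for some `t* ∈ (0,T)` and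
`x₀ < x₁` the energy density `f_{t*}` vanishes on `(x₀,x₁)` and `F_{t*}(x₀) = F_{t*}(x₁)`,
then `F_t ≡ 0`, `f_t ≡ 0`, `u(t,·) ≡ 0` and `ρ(t,·) ≡ 0` for every `t ∈ [0,T)`. -/
theorem ch2_theorem31
    (T : ℝ) (hT : 0 < T)
    (u ρ : ℝ → ℝ → ℝ)
    (hu_reg : ∀ t ∈ Set.Ico (0:ℝ) T, ContDiff ℝ 1 (u t))
    (hρ_reg : ∀ t ∈ Set.Ico (0:ℝ) T, Continuous (ρ t))
    (hu_L2 : ∀ t ∈ Set.Ico (0:ℝ) T, Integrable (fun x => (u t x)^2))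
    (hux_L2 : ∀ t ∈ Set.Ico (0:ℝ) T, Integrable (fun x => (deriv (u t) x)^2))
    (hρ_L2 : ∀ t ∈ Set.Ico (0:ℝ) T, Integrable (fun x => (ρ t x)^2))
    (f : ℝ → ℝ → ℝ)
    (hf : ∀ t x, f t x = (u t x)^2 + (1/2) * (deriv (u t) x)^2 + (1/2) * (ρ t x)^2)
    (hf_int : ∀ t ∈ Set.Ico (0:ℝ) T, Integrable (f t))
    (H : ℝ → ℝ)
    (hH : ∀ t, H t = (1/2) * ∫ x, ((u t x)^2 + (deriv (u t) x)^2 + (ρ t x)^2))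
    (hcons : ∀ t ∈ Set.Ico (0:ℝ) T, H t = H 0)
    (F : ℝ → ℝ → ℝ)
    (hF : ∀ t x, F t x = ∫ y, (-(1/2) * Real.sign (x - y) * Real.exp (-|x - y|)) * f t y)
    (tstar : ℝ) (htstar : tstar ∈ Set.Ioo 0 T)
    (x₀ x₁ : ℝ) (hx01 : x₀ < x₁)
    (hvan : ∀ x ∈ Set.Ioo x₀ x₁, f tstar x = 0)
    (hFF : F tstar x₀ = F tstar x₁) :
    ∀ t ∈ Set.Ico (0:ℝ) T, ∀ x : ℝ,
      F t x = 0 ∧ f t x = 0 ∧ u t x = 0 ∧ ρ t x = 0 := by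
  have hts : tstar ∈ Set.Ico (0:ℝ) T := ⟨htstar.1.le, htstar.2⟩
  have hd : ∀ t ∈ Set.Ico (0:ℝ) T, Continuous (deriv (u t)) := fun t ht =>
    (hu_reg t ht).continuous_deriv le_rfl
  have hfc : Continuous (f tstar) := by
    have h1 := (hu_reg tstar hts).continuous
    have h2 := hd tstar hts
    have h3 := hρ_reg tstar hts
    have : f tstar = fun x => (u tstar x)^2 + (1/2) * (deriv (u tstar) x)^2
        + (1/2) * (ρ tstar x)^2 := funext (hf tstar)
    rw [this]
    fun_prop
  have hf0 : ∀ x, f tstar x = 0 := by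
    refine aux_zero (f tstar) (hf_int tstar hts) hfc (fun x => ?_) x₀ x₁ hx01 hvan ?_
    · rw [hf]; positivity
    · rw [← hF, ← hF, hFF]
  have hHs : H tstar = 0 := by
    rw [hH]
    have : ∀ x, (u tstar x)^2 + (deriv (u tstar) x)^2 + (ρ tstar x)^2 = 0 := by
      intro x
      have h := hf0 x
      rw [hf] at h
      have h1 := sq_nonneg (u tstar x)
      have h2 := sq_nonneg (deriv (u tstar) x)
      have h3 := sq_nonneg (ρ tstar x)
      linarith
    simp [this]
  have key : ∀ t ∈ Set.Ico (0:ℝ) T, ∀ x,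
      (u t x)^2 + (deriv (u t) x)^2 + (ρ t x)^2 = 0 := by
    intro t ht
    have h0 : H t = 0 := by rw [hcons t ht, ← hcons tstar hts, hHs]
    rw [hH] at h0
    have h0' : ∫ x, ((u t x)^2 + (deriv (u t) x)^2 + (ρ t x)^2) = 0 := by linarith
    have hI : Integrable (fun x => (u t x)^2 + (deriv (u t) x)^2 + (ρ t x)^2) :=
      ((hu_L2 t ht).add (hux_L2 t ht)).add (hρ_L2 t ht)
    have hn : 0 ≤ (fun x => (u t x)^2 + (deriv (u t) x)^2 + (ρ t x)^2) := fun x => by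
      simp only [Pi.zero_apply]; positivity
    rw [integral_eq_zero_iff_of_nonneg hn hI] at h0'
    have h1 := (hu_reg t ht).continuous
    have h2 := hd t ht
    have h3 := hρ_reg t ht
    have hc : Continuous (fun x => (u t x)^2 + (deriv (u t) x)^2 + (ρ t x)^2) := by fun_prop
    have := (hc.ae_eq_iff_eq volume (continuous_const (y := (0:ℝ)))).1 h0'
    exact fun x => congrFun this x
  intro t ht
  have hft : ∀ x, f t x = 0 ∧ u t x = 0 ∧ ρ t x = 0 := by
    intro x
    have h := key t ht x
    have h1 := sq_nonneg (u t x)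
    have h2 := sq_nonneg (deriv (u t) x)
    have h3 := sq_nonneg (ρ t x)
    refine ⟨?_, ?_, ?_⟩
    · rw [hf]; linarith
    · exact pow_eq_zero_iff (two_ne_zero) |>.1 (by linarith)
    · exact pow_eq_zero_iff (two_ne_zero) |>.1 (by linarith)
  intro x
  refine ⟨?_, hft x⟩
  rw [hF]
  simp [fun y => (hft y).1]
end

section
/- Let f : ℝ → ℝ be continuous, non-negative, and 1-periodic, and define F(x) := ∫_{[0,1)} g'(x−y) f(y) dy, where g'(z) := sinh(z − ⌊z⌋ − 1/2)/(2·sinh(1/2)) for z ∉ ℤ and g'(z) := 0 for z ∈ ℤ. If there exist a, b ∈ ℝ with 0 ≤ a < b < 1 such that f(x) = 0 for all x ∈ (a,b) and F(a) = F(b), then f(x) = 0 for all x ∈ ℝ. -/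
open MeasureTheory

/-- **Theorem 3.2 (periodic case).** Let `f` be continuous, non-negative and `1`-periodic,
and `F(x) = ∫_{[0,1)} g'(x-y) f(y) dy` with `g'(z) = sinh(z-⌊z⌋-1/2)/(2 sinh(1/2))` off the
integers. If `f` vanishes on some arc `(a,b)` with `0 ≤ a < b < 1` and `F(a) = F(b)`, then
`f` vanishes identically. -/
theorem ch2_theorem32_circle
    (f : ℝ → ℝ) (hf_cont : Continuous f) (hf_nonneg : ∀ x, 0 ≤ f x)
    (hf_per : ∀ x, f (x + 1) = f x)
    (g' : ℝ → ℝ)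
    (hg'_int : ∀ n : ℤ, g' (n : ℝ) = 0)
    (hg'_nonint : ∀ z : ℝ, (∀ n : ℤ, z ≠ (n : ℝ)) →
      g' z = Real.sinh (z - (⌊z⌋ : ℝ) - 1/2) / (2 * Real.sinh (1/2)))
    (F : ℝ → ℝ)
    (hF : ∀ x, F x = ∫ y in Set.Ico (0:ℝ) 1, g' (x - y) * f y)
    (a b : ℝ) (ha : 0 ≤ a) (hab : a < b) (hb : b < 1)
    (hvan : ∀ x ∈ Set.Ioo a b, f x = 0)
    (hFab : F a = F b) :
    ∀ x : ℝ, f x = 0 := by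
  have hs : 0 < 2 * Real.sinh (1/2) := by
    have : 0 < Real.sinh (1/2) := Real.sinh_pos_iff.2 (by norm_num)
    linarith
  have hg : ∀ z, g' z = if Int.fract z = 0 then 0 else
      Real.sinh (Int.fract z - 1/2) / (2 * Real.sinh (1/2)) := by
    intro z
    split_ifs with h
    · obtain ⟨n, hn⟩ := Int.fract_eq_zero_iff.1 h
      rw [← hn]; exact hg'_int n
    · rw [hg'_nonint z]
      · rfl
      · intro n hn
        apply h
        rw [hn]; simp
  have hgm : Measurable g' := by
    have : g' = fun z => if Int.fract z = 0 then 0 else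
      Real.sinh (Int.fract z - 1/2) / (2 * Real.sinh (1/2)) := funext hg
    rw [this]
    refine Measurable.ite (measurable_fract (measurableSet_singleton (0:ℝ))) measurable_const ?_
    exact (Real.measurable_sinh.comp (measurable_fract.sub_const _)).div_const _
  have hgb : ∀ z, ‖g' z‖ ≤ 1 := by
    intro z
    rw [hg]
    split_ifs
    · simp
    · rw [norm_div, Real.norm_of_nonneg hs.le, div_le_one hs, Real.norm_eq_abs, abs_le]
      have h0 := Int.fract_nonneg z
      have h1 := (Int.fract_lt_one z).le
      have e1 : Real.sinh (Int.fract z - 1/2) ≤ Real.sinh (1/2) :=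
        Real.sinh_le_sinh.2 (by linarith)
      have e2 : Real.sinh (-(1/2)) ≤ Real.sinh (Int.fract z - 1/2) :=
        Real.sinh_le_sinh.2 (by linarith)
      rw [Real.sinh_neg] at e2
      constructor <;> linarith
  have hfi : IntegrableOn f (Set.Ico 0 1) :=
    (hf_cont.integrableOn_Icc (a := 0) (b := 1)).mono_set Set.Ico_subset_Icc_self
  have hint : ∀ x, IntegrableOn (fun y => g' (x - y) * f y) (Set.Ico 0 1) := by
    intro x
    refine Integrable.bdd_mul (c := 1) hfi ?_ ?_
    · exact (hgm.comp (measurable_const.sub measurable_id)).aestronglyMeasurable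
    · exact Filter.Eventually.of_forall fun y => hgb _
  have hcl : ∀ x ∈ Set.Icc a b, f x = 0 := by
    have hc : IsClosed {x | f x = 0} := isClosed_eq hf_cont continuous_const
    have := hc.closure_subset_iff.2 (show Set.Ioo a b ⊆ {x | f x = 0} from hvan)
    rw [closure_Ioo hab.ne] at this
    exact this
  have hlt : ∀ y ∈ Set.Ico (0:ℝ) 1, y ∉ Set.Icc a b → g' (a - y) < g' (b - y) := by
    intro y hy hn
    have key : ∃ n : ℤ, ∀ t, t = a ∨ t = b → (n:ℝ) < t - y ∧ t - y < n + 1 := by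
      by_cases h : y < a
      · refine ⟨0, ?_⟩
        rintro t (rfl | rfl) <;> constructor <;> push_cast <;> linarith [hy.1, hy.2]
      · have h2 : b < y := by
          by_contra h3
          exact hn ⟨not_lt.1 h, not_lt.1 h3⟩
        refine ⟨-1, ?_⟩
        rintro t (rfl | rfl) <;> constructor <;> push_cast <;> linarith [hy.1, hy.2]
    obtain ⟨n, hn⟩ := key
    have hv : ∀ t, t = a ∨ t = b →
        g' (t - y) = Real.sinh (t - y - n - 1/2) / (2 * Real.sinh (1/2)) := by
      intro t ht
      obtain ⟨h1, h2⟩ := hn t ht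
      have hfl : ⌊t - y⌋ = n := Int.floor_eq_iff.2 ⟨h1.le, h2⟩
      have hfr : Int.fract (t - y) = t - y - n := by rw [Int.fract, hfl]
      rw [hg, hfr, if_neg (by linarith)]
    rw [hv a (Or.inl rfl), hv b (Or.inr rfl)]
    exact div_lt_div_of_pos_right (Real.sinh_lt_sinh.2 (by linarith)) hs
  have hz : ∫ y in Set.Ico (0:ℝ) 1, (g' (b - y) * f y - g' (a - y) * f y) = 0 := by
    rw [integral_sub (hint b) (hint a), ← hF, ← hF, hFab, sub_self]
  have hnn : 0 ≤ᵐ[volume.restrict (Set.Ico (0:ℝ) 1)]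
      fun y => g' (b - y) * f y - g' (a - y) * f y := by
    refine (ae_restrict_iff' measurableSet_Ico).2 (Filter.Eventually.of_forall fun y hy => ?_)
    show 0 ≤ g' (b - y) * f y - g' (a - y) * f y
    by_cases h : y ∈ Set.Icc a b
    · simp [hcl y h]
    · have := mul_nonneg (sub_nonneg.2 (hlt y hy h).le) (hf_nonneg y)
      linarith
  have hae := (integral_eq_zero_iff_of_nonneg_ae hnn ((hint b).sub (hint a))).1 hz
  have hf0 : f =ᵐ[volume.restrict (Set.Ico (0:ℝ) 1)] fun _ => 0 := by
    filter_upwards [hae, ae_restrict_mem measurableSet_Ico] with y h1 hy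
    by_cases h : y ∈ Set.Icc a b
    · exact hcl y h
    · have h1' : g' (b - y) * f y - g' (a - y) * f y = 0 := h1
      rw [← sub_mul] at h1'
      exact (mul_eq_zero.1 h1').resolve_left (sub_pos.2 (hlt y hy h)).ne'
  have hon := Measure.eqOn_Ico_of_ae_eq volume hf0 hf_cont.continuousOn continuousOn_const
  intro x
  have hp : Function.Periodic f 1 := hf_per
  have hx : f (Int.fract x) = f x := by
    have := hp.sub_int_mul_eq (x := x) ⌊x⌋
    rwa [mul_one] at this
  rw [← hx]
  exact hon ⟨Int.fract_nonneg x, Int.fract_lt_one x⟩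
end

section
/- Let f : ℝ → ℝ be continuous and 1-periodic, and define h(x) := ∫_{[0,1)} g(x−y) f(y) dy, where g(z) := cosh(z − ⌊z⌋ − 1/2)/(2·sinh(1/2)) and ⌊·⌋ is the greatest-integer function. Then h is 1-periodic, twice differentiable on ℝ, and satisfies h(x) − h''(x) = f(x) for all x ∈ ℝ. -/
open MeasureTheory

/-- Derivative of a sliding window integral. -/
lemma window_hasDerivAt (k : ℝ → ℝ) (hk : Continuous k) (x : ℝ) :
    HasDerivAt (fun x => ∫ y in (x - 1)..x, k y) (k x - k (x - 1)) x := by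
  have e : (fun x : ℝ => ∫ y in (x - 1)..x, k y)
      = fun x => (∫ y in (0:ℝ)..x, k y) - ∫ y in (0:ℝ)..(x - 1), k y := by
    funext t
    rw [intervalIntegral.integral_interval_sub_left] <;> exact hk.intervalIntegrable _ _
  rw [e]
  have d : ∀ t, HasDerivAt (fun x => ∫ y in (0:ℝ)..x, k y) (k t) t := fun t =>
    hk.integral_hasStrictDerivAt 0 t |>.hasDerivAt
  exact (d x).sub ((d (x - 1)).comp_sub_const x 1)

/-- **Helmholtz inversion on the circle.** For `f` continuous and `1`-periodic, the periodic
convolution `h(x) = ∫_{[0,1)} g(x-y) f(y) dy` with `g(z) = cosh(z-⌊z⌋-1/2)/(2 sinh(1/2))`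
is `1`-periodic, twice differentiable, and satisfies `h - h'' = f`. -/
theorem green_convolution_solves_helmholtz_circle
    (f : ℝ → ℝ) (hf_cont : Continuous f) (hf_per : ∀ x, f (x + 1) = f x)
    (g : ℝ → ℝ)
    (hg : ∀ z : ℝ, g z = Real.cosh (z - (⌊z⌋ : ℝ) - 1/2) / (2 * Real.sinh (1/2)))
    (h : ℝ → ℝ)
    (hh : ∀ x, h x = ∫ y in Set.Ico (0:ℝ) 1, g (x - y) * f y) :
    (∀ x : ℝ, h (x + 1) = h x) ∧
    (∀ x : ℝ, DifferentiableAt ℝ h x) ∧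
    (∀ x : ℝ, DifferentiableAt ℝ (deriv h) x) ∧
    (∀ x : ℝ, h x - deriv (deriv h) x = f x) := by
  have gper : ∀ z, g (z + 1) = g z := by
    intro z
    rw [hg, hg, Int.floor_add_one]
    push_cast
    ring_nf
  have gper' : ∀ z, g (z - 1) = g z := by
    intro z
    rw [← gper (z - 1)]
    ring_nf
  have hs : Real.sinh (1/2) ≠ 0 := by
    have : 0 < Real.sinh (1/2) := Real.sinh_pos_iff.2 (by norm_num)
    exact this.ne'
  have cC : Continuous fun y => Real.cosh y * f y := Real.continuous_cosh.mul hf_cont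
  have cS : Continuous fun y => Real.sinh y * f y := Real.continuous_sinh.mul hf_cont
  have fm : ∀ x, f (x - 1) = f x := by
    intro x
    rw [← hf_per (x - 1)]
    ring_nf
  set C : ℝ → ℝ := fun x => ∫ y in (x - 1)..x, Real.cosh y * f y with hC
  set S : ℝ → ℝ := fun x => ∫ y in (x - 1)..x, Real.sinh y * f y with hS
  have dC : ∀ x, HasDerivAt C (Real.cosh x * f x - Real.cosh (x - 1) * f (x - 1)) x :=
    fun x => window_hasDerivAt _ cC x
  have dS : ∀ x, HasDerivAt S (Real.sinh x * f x - Real.sinh (x - 1) * f (x - 1)) x :=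
    fun x => window_hasDerivAt _ cS x
  have key : h = fun x => (Real.cosh (x - 1/2) * C x - Real.sinh (x - 1/2) * S x)
      / (2 * Real.sinh (1/2)) := by
    funext x
    have per : Function.Periodic (fun y => g (x - y) * f y) 1 := by
      intro y
      have : g (x - (y + 1)) = g (x - y) := by
        rw [← gper' (x - y)]
        ring_nf
      simp only [this, hf_per]
    have e1 : h x = ∫ y in (x - 1)..x, g (x - y) * f y := by
      have := per.intervalIntegral_add_eq 0 (x - 1)
      rw [zero_add, sub_add_cancel] at this
      rw [hh, ← this, intervalIntegral.integral_of_le zero_le_one,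
        integral_Ico_eq_integral_Ioo, integral_Ioc_eq_integral_Ioo]
    have e2 : (∫ y in (x - 1)..x, g (x - y) * f y)
        = ∫ y in (x - 1)..x, ((Real.cosh (x - 1/2) / (2 * Real.sinh (1/2))) * (Real.cosh y * f y)
          - (Real.sinh (x - 1/2) / (2 * Real.sinh (1/2))) * (Real.sinh y * f y)) := by
      rw [intervalIntegral.integral_of_le (by linarith), intervalIntegral.integral_of_le (by linarith)]
      rw [integral_Ioc_eq_integral_Ioo, integral_Ioc_eq_integral_Ioo]
      refine setIntegral_congr_fun measurableSet_Ioo ?_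
      intro y hy
      have fl : ⌊x - y⌋ = 0 := by
        rw [Int.floor_eq_zero_iff]
        constructor <;> linarith [hy.1, hy.2]
      have ch : Real.cosh (x - y - 1/2) = Real.cosh (x - 1/2) * Real.cosh y
          - Real.sinh (x - 1/2) * Real.sinh y := by
        rw [← Real.cosh_sub]
        ring_nf
      simp only [hg, fl, Int.cast_zero, sub_zero, ch]
      ring
    rw [e1, e2, intervalIntegral.integral_sub ((cC.intervalIntegrable _ _).const_mul _)
      ((cS.intervalIntegrable _ _).const_mul _), intervalIntegral.integral_const_mul,
      intervalIntegral.integral_const_mul]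
    ring
  have dch : ∀ x : ℝ, HasDerivAt (fun x => Real.cosh (x - 1/2)) (Real.sinh (x - 1/2)) x :=
    fun x => (Real.hasDerivAt_cosh (x - 1/2)).comp_sub_const x (1/2)
  have dsh : ∀ x : ℝ, HasDerivAt (fun x => Real.sinh (x - 1/2)) (Real.cosh (x - 1/2)) x :=
    fun x => (Real.hasDerivAt_sinh (x - 1/2)).comp_sub_const x (1/2)
  have a1 : ∀ x : ℝ, Real.cosh (x - 1/2) * Real.cosh x - Real.sinh (x - 1/2) * Real.sinh x
      = Real.cosh (1/2) := by
    intro x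
    rw [← Real.cosh_sub, ← Real.cosh_neg]
    ring_nf
  have a2 : ∀ x : ℝ, Real.cosh (x - 1/2) * Real.cosh (x - 1)
      - Real.sinh (x - 1/2) * Real.sinh (x - 1) = Real.cosh (1/2) := by
    intro x
    rw [← Real.cosh_sub]
    ring_nf
  have a3 : ∀ x : ℝ, Real.sinh (x - 1/2) * Real.cosh x - Real.cosh (x - 1/2) * Real.sinh x
      = - Real.sinh (1/2) := by
    intro x
    rw [← Real.sinh_sub, ← Real.sinh_neg]
    ring_nf
  have a4 : ∀ x : ℝ, Real.sinh (x - 1/2) * Real.cosh (x - 1)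
      - Real.cosh (x - 1/2) * Real.sinh (x - 1) = Real.sinh (1/2) := by
    intro x
    rw [← Real.sinh_sub]
    ring_nf
  have d1 : ∀ x, HasDerivAt h ((Real.sinh (x - 1/2) * C x - Real.cosh (x - 1/2) * S x)
      / (2 * Real.sinh (1/2))) x := by
    intro x
    rw [key]
    refine HasDerivAt.congr_deriv ((((dch x).mul (dC x)).sub ((dsh x).mul (dS x))).div_const (2 * Real.sinh (1/2))) ?_
    rw [fm]
    congr 1
    linear_combination f x * a1 x - f x * a2 x
  have d1' : deriv h = fun x => (Real.sinh (x - 1/2) * C x - Real.cosh (x - 1/2) * S x)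
      / (2 * Real.sinh (1/2)) := funext fun x => (d1 x).deriv
  have d2 : ∀ x, HasDerivAt (deriv h) (h x - f x) x := by
    intro x
    rw [d1']
    refine HasDerivAt.congr_deriv ((((dsh x).mul (dC x)).sub ((dch x).mul (dS x))).div_const (2 * Real.sinh (1/2))) ?_
    rw [fm, key]
    beta_reduce
    rw [div_eq_iff (mul_ne_zero two_ne_zero hs), sub_mul, div_mul_cancel₀ _ (mul_ne_zero two_ne_zero hs)]
    linear_combination f x * a3 x - f x * a4 x
  refine ⟨?_, fun x => (d1 x).differentiableAt, fun x => (d2 x).differentiableAt, ?_⟩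
  · intro x
    rw [hh, hh]
    congr 1
    funext y
    have : g (x + 1 - y) = g (x - y) := by
      rw [← gper (x - y)]
      ring_nf
    rw [this]
  · intro x
    rw [(d2 x).deriv]
    ring
end
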